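/- arXiv:1909.03450 — 2 statements merged into one kernel-verified Lean document; each statement's English description precedes it below -/
import Mathlib

section
/- (Dedekind reciprocity law) Let A be a commutative ring, n ≥ 1, and u_1, ..., u_n ∈ A^* such that all partial sums u_1 + ... + u_k (1 ≤ k ≤ n) are units; set u_0 = u_1 + ... + u_n. Then the alternating sum Σ_{i=0}^n (-1)^i {u_0, ..., û_i, ..., u_n} (omitting the i-th entry) lies in the ideal of the Milnor K-ring K^M(A) generated by {-1}. -/
variable (A : Type) [CommRing A]

/-- Generating relations for the Milnor `K`-group of a commutative ring:
multilinearity relations together with the Steinberg relations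
(some two slots summing to `0` or `1`). -/
def steinbergSet (n : ℕ) : Set (FreeAbelianGroup (Fin n → Aˣ)) :=
  {x | ∃ (v : Fin n → Aˣ) (i : Fin n) (a b : Aˣ),
      v i = a * b ∧
      x = FreeAbelianGroup.of v - FreeAbelianGroup.of (Function.update v i a)
            - FreeAbelianGroup.of (Function.update v i b)} ∪
  {x | ∃ v : Fin n → Aˣ,
      (∃ i j : Fin n, i ≠ j ∧ (((v i : A) + (v j : A) = 0) ∨ ((v i : A) + (v j : A) = 1))) ∧
      x = FreeAbelianGroup.of v}

def milnorRel (n : ℕ) : AddSubgroup (FreeAbelianGroup (Fin n → Aˣ)) :=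
  AddSubgroup.closure (steinbergSet A n)

/-- The `n`-th Milnor `K`-group `K_n^M(A)` of a commutative ring `A`. -/
def MilnorK (n : ℕ) : Type :=
  FreeAbelianGroup (Fin n → Aˣ) ⧸ milnorRel A n

instance (n : ℕ) : AddCommGroup (MilnorK A n) :=
  inferInstanceAs (AddCommGroup (FreeAbelianGroup (Fin n → Aˣ) ⧸ milnorRel A n))

/-- The Milnor symbol `{v 0, …, v (n-1)} ∈ K_n^M(A)`. -/
def symbolK (n : ℕ) (v : Fin n → Aˣ) : MilnorK A n :=
  QuotientAddGroup.mk (FreeAbelianGroup.of v)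

/-- The degree-`n` part of the ideal of the Milnor `K`-ring `K^M(A)` generated by `{-1}`:
the subgroup of `K_n^M(A)` generated by symbols having `-1` in some slot. -/
def idealNegOne (n : ℕ) : AddSubgroup (MilnorK A n) :=
  AddSubgroup.closure {x | ∃ v : Fin n → Aˣ, (∃ i : Fin n, v i = -1) ∧ x = symbolK A n v}

/-!
Modulo `{-1}` the Milnor symbol is alternating, because `{a, a} = {a, -1} + {a, -a}`. For an
alternating form `f`, the sum `∑ (-1)ⁱ f (y₀, …, ŷᵢ, …, yₙ)` equals `f (y₁ - y₀, …, yₙ - y₀)`, so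
the reciprocity law amounts to the vanishing of `{u₁ / u₀, …, uₙ / u₀}`. Let `s = u₁ + ⋯ + uₙ₋₁`.
As `s / u₀ + uₙ / u₀ = 1`, the form `{…, uₙ / u₀}` vanishes as soon as one entry is `s / u₀`, so
dividing its entries by `s / u₀` does not change its value:
`{u₁ / u₀, …, uₙ₋₁ / u₀, uₙ / u₀} = {u₁ / s, …, uₙ₋₁ / s, uₙ / u₀}`,
which is `0` by induction on `n`.
-/

section Multilinear

variable {R N : Type*} [AddCommGroup N]

theorem multilinear_map_sub_eq_of_eq_zero {ι : Type*} [Finite ι] [Ring R] {M : ι → Type*}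
    [∀ i, AddCommGroup (M i)] [∀ i, Module R (M i)] [Module R N]
    (f : MultilinearMap R M N) (c : ∀ i, M i) (hf : ∀ v i, v i = c i → f v = 0) (x : ∀ i, M i) :
    f (x - c) = f x := by
  classical
  have := Fintype.ofFinite ι
  have hexpand := f.map_add_univ (x - c) c
  rw [sub_add_cancel, Finset.sum_eq_single Finset.univ, Finset.piecewise_univ] at hexpand
  · exact hexpand.symm
  · intro s _ hs
    obtain ⟨i, hi⟩ : ∃ i, i ∉ s := by simpa [Finset.eq_univ_iff_forall] using hs
    exact hf _ i (s.piecewise_eq_of_notMem _ _ hi)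
  · simp

variable {M : Type*} [AddCommGroup M]

theorem alternating_map_add_const {ι : Type*} [Fintype ι] [DecidableEq ι] [Ring R] [Module R M]
    [Module R N] (f : M [⋀^ι]→ₗ[R] N) (x : ι → M) (c : M) :
    f (fun i => x i + c) = f x + ∑ i, f (Function.update x i c) := by
  have htwo : ∑ s : Finset ι with 2 ≤ s.card,
      f.toMultilinearMap (s.piecewise (fun _ => c) x) = 0 := by
    refine Finset.sum_eq_zero fun s hs => ?_
    obtain ⟨i, hi, j, hj, hij⟩ := Finset.one_lt_card.mp (Finset.mem_filter.mp hs).2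
    exact f.map_eq_zero_of_eq _ (by simp [hi, hj]) hij
  have hexpand := f.toMultilinearMap.map_add_eq_map_add_linearDeriv_add x (fun _ => c)
  rw [htwo, add_zero, f.toMultilinearMap.linearDeriv_apply] at hexpand
  exact hexpand

variable [CommRing R] [Module R M] [Module R N] {n : ℕ}

theorem alternating_map_update_tail (f : M [⋀^Fin n]→ₗ[R] N) (y : Fin (n + 1) → M) (i : Fin n) :
    f (Function.update (Fin.tail y) i (y 0)) = (-1 : ℤ) ^ (i : ℕ) • f (i.succ.removeNth y) := by
  have h := f.neg_one_pow_smul_map_removeNth_add_eq_zero_of_eq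
    (v := Function.update y i.succ (y 0)) (by simp [i.succ_ne_zero.symm]) i.succ_ne_zero.symm
  simp only [Fin.val_zero, pow_zero, one_smul, Fin.removeNth_zero, Fin.tail_update_succ,
    Fin.removeNth_update, Fin.val_succ, pow_succ, mul_neg_one, neg_smul] at h
  exact add_neg_eq_zero.mp h

theorem alternating_map_succ_sub_zero (f : M [⋀^Fin n]→ₗ[R] N) (y : Fin (n + 1) → M) :
    f (fun i => y i.succ - y 0) = ∑ i : Fin (n + 1), (-1 : ℤ) ^ (i : ℕ) • f (i.removeNth y) := by
  calc f (fun i => y i.succ - y 0)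
      = f (Fin.tail y) + ∑ i, f (Function.update (Fin.tail y) i (-y 0)) := by
        simpa only [Fin.tail, sub_eq_add_neg] using alternating_map_add_const f (Fin.tail y) (-y 0)
    _ = f (Fin.tail y) + ∑ i : Fin n, (-1 : ℤ) ^ (i.succ : ℕ) • f (i.succ.removeNth y) := by
        simp only [f.map_update_neg, alternating_map_update_tail, Fin.val_succ, pow_succ,
          mul_neg_one, neg_smul]
    _ = ∑ i : Fin (n + 1), (-1 : ℤ) ^ (i : ℕ) • f (i.removeNth y) := by
        rw [Fin.sum_univ_succ, Fin.val_zero, pow_zero, one_smul, Fin.removeNth_zero]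

end Multilinear

section Steinberg

variable {R G : Type*} [CommSemiring R] [AddCommGroup G]

/-- The Steinberg relation for multilinear maps on the unit group `Rˣ`, which is written additively
as `Additive Rˣ`: the map vanishes on tuples in which two entries have sum `1` in `R`. -/
def IsSteinberg {ι : Type*} (f : MultilinearMap ℤ (fun _ : ι => Additive Rˣ) G) : Prop :=
  ∀ v i j, i ≠ j → ((v i).toMul : R) + (v j).toMul = 1 → f v = 0

namespace IsSteinberg

theorem curryRight {n : ℕ} {f : MultilinearMap ℤ (fun _ : Fin (n + 1) => Additive Rˣ) G}
    (hf : IsSteinberg f) (b : Additive Rˣ) :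
    IsSteinberg ((LinearMap.applyₗ b).compMultilinearMap f.curryRight) := fun v i j hij hadd =>
  hf (Fin.snoc v b) i.castSucc j.castSucc (by simpa using hij) (by simpa using hadd)

theorem curryRight_eq_zero {n : ℕ} {f : MultilinearMap ℤ (fun _ : Fin (n + 1) => Additive Rˣ) G}
    (hf : IsSteinberg f) {v : Fin n → Additive Rˣ} {b : Additive Rˣ} {i : Fin n}
    (hadd : ((v i).toMul : R) + b.toMul = 1) : f.curryRight v b = 0 :=
  hf (Fin.snoc v b) i.castSucc (Fin.last n) i.castSucc_lt_last.ne (by simpa using hadd)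

theorem map_sub_eq_zero {n : ℕ} {f : MultilinearMap ℤ (fun _ : Fin (n + 1) => Additive Rˣ) G}
    (hf : IsSteinberg f) (u : Fin (n + 1) → Rˣ) (u0 : Rˣ) (h0 : (u0 : R) = ∑ i, (u i : R))
    (hpart : ∀ k, IsUnit (∑ i ∈ Finset.Iic k, (u i : R))) :
    f (fun i => Additive.ofMul (u i) - Additive.ofMul u0) = 0 := by
  induction n generalizing u0 with
  | zero =>
    obtain rfl : u0 = u 0 := Units.ext (by simpa using h0)
    exact f.map_coord_zero 0 (sub_self _)
  | succ n ih =>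
    have hinit (k : Fin (n + 1)) : IsUnit (∑ i ∈ Finset.Iic k, (u i.castSucc : R)) :=
      Fin.sum_Iic_castSucc (fun i => (u i : R)) k ▸ hpart k.castSucc
    obtain ⟨s, hs⟩ : IsUnit (∑ i : Fin (n + 1), (u i.castSucc : R)) := by
      simpa only [← Fin.top_eq_last, Finset.Iic_top] using hinit (Fin.last n)
    let b : Additive Rˣ := Additive.ofMul (u (Fin.last (n + 1)) / u0)
    let c : Additive Rˣ := Additive.ofMul (s / u0)
    let g := (LinearMap.applyₗ b).compMultilinearMap f.curryRight
    have hcb : (c.toMul : R) + b.toMul = 1 := by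
      simp only [b, c, toMul_ofMul, div_eq_mul_inv, Units.val_mul]
      rw [← add_mul, hs, ← Fin.sum_univ_castSucc (fun i => (u i : R)), ← h0, Units.mul_inv]
    have hgc (v : Fin (n + 1) → Additive Rˣ) (i) (hi : v i = c) : g v = 0 :=
      hf.curryRight_eq_zero (hi ▸ hcb)
    calc f (fun i => Additive.ofMul (u i) - Additive.ofMul u0)
        = g (fun i => Additive.ofMul (u i.castSucc) - Additive.ofMul u0) :=
          congrArg f (Fin.snoc_init_self _).symm
      _ = g (fun i => Additive.ofMul (u i.castSucc) - Additive.ofMul s) := by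
          rw [← multilinear_map_sub_eq_of_eq_zero g (fun _ => c) hgc]
          exact congrArg g (funext fun i => sub_sub_sub_cancel_right _ _ _)
      _ = 0 := ih (hf.curryRight b) (fun i => u i.castSucc) s hs hinit

end IsSteinberg

theorem dedekind_reciprocity_general {n : ℕ} (f : Additive Rˣ [⋀^Fin (n + 1)]→ₗ[ℤ] G)
    (hf : IsSteinberg f.toMultilinearMap) (u : Fin (n + 1) → Rˣ) (u0 : Rˣ)
    (h0 : (u0 : R) = ∑ i, (u i : R)) (hpart : ∀ k, IsUnit (∑ i ∈ Finset.Iic k, (u i : R))) :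
    ∑ i : Fin (n + 2), (-1 : ℤ) ^ (i : ℕ) •
      f (fun j => Additive.ofMul ((Fin.cons u0 u : Fin (n + 2) → Rˣ) (i.succAbove j))) = 0 :=
  (alternating_map_succ_sub_zero f fun k =>
    Additive.ofMul ((Fin.cons u0 u : Fin (n + 2) → Rˣ) k)).symm.trans
    (hf.map_sub_eq_zero u u0 h0 hpart)

end Steinberg

section MilnorSymbol

variable {A} {n : ℕ}

theorem symbolK_update_mul (v : Fin n → Aˣ) (i : Fin n) (a b : Aˣ) :
    symbolK A n (Function.update v i (a * b)) =
      symbolK A n (Function.update v i a) + symbolK A n (Function.update v i b) := by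
  have hrel : FreeAbelianGroup.of (Function.update v i (a * b)) -
      FreeAbelianGroup.of (Function.update v i a) - FreeAbelianGroup.of (Function.update v i b) ∈
        milnorRel A n :=
    AddSubgroup.subset_closure (Or.inl ⟨Function.update v i (a * b), i, a, b, by simp, by simp⟩)
  rw [← sub_eq_zero, ← sub_sub]
  exact (QuotientAddGroup.eq_zero_iff _).mpr hrel

theorem symbolK_eq_zero (v : Fin n → Aˣ) {i j : Fin n} (hij : i ≠ j)
    (h : (v i : A) + v j = 0 ∨ (v i : A) + v j = 1) : symbolK A n v = 0 :=
  (QuotientAddGroup.eq_zero_iff _).mpr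
    (AddSubgroup.subset_closure (Or.inr ⟨v, ⟨i, j, hij, h⟩, rfl⟩))

theorem symbolK_mem_idealNegOne_of_eq (v : Fin n → Aˣ) {i j : Fin n} (h : v i = v j)
    (hij : i ≠ j) : symbolK A n v ∈ idealNegOne A n := by
  have hneg : symbolK A n (Function.update v i (-v i)) = 0 :=
    symbolK_eq_zero _ hij (Or.inl (by simp [hij.symm, h]))
  have hsplit : symbolK A n v = symbolK A n (Function.update v i (-1)) := by
    simpa [hneg] using symbolK_update_mul v i (-1) (-v i)
  rw [hsplit]
  exact AddSubgroup.subset_closure ⟨_, ⟨i, by simp⟩, rfl⟩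

theorem toMul_comp_update {ι M : Type*} [DecidableEq ι] (v : ι → Additive M) (i : ι)
    (a : Additive M) :
    (fun j => (Function.update v i a j).toMul) =
      Function.update (fun j => (v j).toMul) i a.toMul :=
  funext fun j => Function.apply_update (fun _ => Additive.toMul) v i a j

variable (A n)

/-- The Milnor symbol as a multilinear map. Units are written additively, so that multilinearity is
over `ℤ`. -/
def symbolMultilinear : MultilinearMap ℤ (fun _ : Fin n => Additive Aˣ) (MilnorK A n) :=
  MultilinearMap.mk' (fun v => symbolK A n fun i => (v i).toMul)
    (fun v i a b => by
      simpa only [toMul_comp_update, toMul_add] using symbolK_update_mul _ i a.toMul b.toMul)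
    (fun v i m a => by
      simp only [toMul_comp_update]
      exact map_zsmul (AddMonoidHom.mk' (M := Additive Aˣ)
        (fun c => symbolK A n (Function.update (fun j => (v j).toMul) i c.toMul))
        fun a b => symbolK_update_mul _ i a.toMul b.toMul) m a)

/-- The Milnor symbol modulo the ideal generated by `{-1}`, as an alternating map. -/
def symbolAlternating : Additive Aˣ [⋀^Fin n]→ₗ[ℤ] (MilnorK A n ⧸ idealNegOne A n) where
  toMultilinearMap :=
    (QuotientAddGroup.mk' (idealNegOne A n)).toIntLinearMap.compMultilinearMap
      (symbolMultilinear A n)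
  map_eq_zero_of_eq' v _ _ h hij :=
    (QuotientAddGroup.eq_zero_iff _).mpr
      (symbolK_mem_idealNegOne_of_eq (fun i => (v i).toMul) (congrArg Additive.toMul h) hij)

theorem isSteinberg_symbolAlternating : IsSteinberg (symbolAlternating A n).toMultilinearMap :=
  fun v _ _ hij hadd => congrArg (QuotientAddGroup.mk' (idealNegOne A n))
    (symbolK_eq_zero (fun k => (v k).toMul) hij (Or.inr hadd))

variable {A n}

theorem sum_zsmul_symbolK_mem_idealNegOne_iff {ι : Type*} (s : Finset ι) (c : ι → ℤ)
    (v : ι → Fin n → Aˣ) :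
    ∑ i ∈ s, c i • symbolK A n (v i) ∈ idealNegOne A n ↔
      ∑ i ∈ s, c i • symbolAlternating A n (fun j => Additive.ofMul (v i j)) = 0 := by
  have hmk : QuotientAddGroup.mk' (idealNegOne A n) (∑ i ∈ s, c i • symbolK A n (v i)) =
      ∑ i ∈ s, c i • symbolAlternating A n (fun j => Additive.ofMul (v i j)) := by
    simp only [map_sum, map_zsmul]
    rfl
  rw [← hmk]
  exact (QuotientAddGroup.eq_zero_iff _).symm

end MilnorSymbol

/-- Dedekind reciprocity law: if `u₁, …, uₙ` are units all of whose partial sums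
`u₁ + ⋯ + u_k` are units, and `u₀ = u₁ + ⋯ + uₙ`, then
`Σ_{i=0}^n (-1)^i {u₀, …, ûᵢ, …, uₙ}` lies in the ideal generated by `{-1}`. -/
theorem dedekind_reciprocity
    (n : ℕ) (hn : 1 ≤ n) (u : Fin n → Aˣ) (u0 : Aˣ)
    (h0 : (u0 : A) = ∑ i, (u i : A))
    (hpart : ∀ k : Fin n, IsUnit (∑ i ∈ Finset.Iic k, (u i : A))) :
    (∑ i : Fin (n + 1), ((-1 : ℤ) ^ (i : ℕ)) •
        symbolK A n (fun j => (Fin.cons u0 u : Fin (n + 1) → Aˣ) (Fin.succAbove i j)))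
      ∈ idealNegOne A n := by
  obtain ⟨n, rfl⟩ := Nat.exists_eq_add_of_le' hn
  exact (sum_zsmul_symbolK_mem_idealNegOne_iff _ _ _).mpr <| dedekind_reciprocity_general
    (symbolAlternating A (n + 1)) (isSteinberg_symbolAlternating A (n + 1)) u u0 h0 hpart
end

section
/- For V = ℚ^n, f ∈ S(V), and γ ∈ GL_n(ℚ): ∫_V f(x·γ) dh_{ℤ^n}(x) = |det γ| · ∫_V f(x) dh_{ℤ^n}(x). -/
open Complex

/-- `e(z) = exp(2πiz)`. -/
noncomputable def e (z : ℂ) : ℂ := Complex.exp (2 * Real.pi * I * z)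

open Classical in
/-- The (ℂ-valued) characteristic function of the affine lattice `a + dℤⁿ` in `ℚⁿ`. -/
noncomputable def ind (n : ℕ) (a : Fin n → ℚ) (d : ℚ) : (Fin n → ℚ) → ℂ :=
  fun x => if ∃ k : Fin n → ℤ, ∀ i, x i = a i + d * k i then 1 else 0

/-- `S(ℚⁿ)` with complex coefficients: the span of the characteristic functions of
affine lattices `a + dℤⁿ` with `d > 0`. -/
noncomputable def Sc (n : ℕ) : Submodule ℂ ((Fin n → ℚ) → ℂ) :=
  Submodule.span ℂ {f | ∃ (a : Fin n → ℚ) (d : ℚ), 0 < d ∧ f = ind n a d}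

/-- The standard bilinear pairing `⟨x, y⟩ = Σᵢ xᵢ yᵢ` on `ℚⁿ`. -/
def dot (n : ℕ) (x y : Fin n → ℚ) : ℚ := ∑ i, x i * y i

/-!
If `γ` is the image of an integral matrix `A`, right multiplication by `γ` embeds `dℤⁿ` in itself
with image of index `|det A|`. Splitting `a + dℤⁿ` into cosets of this image writes
`x ↦ χ_{a + dℤⁿ}(x·γ)` as a sum of `|det A|` characteristic functions of translates of `dℤⁿ`, which
all have the same integral as `χ_{a + dℤⁿ}`. For a general `γ`, take a nonzero scalar matrix `μ`
such that both `μ` and `μγ` are integral: the formulas for these two, applied to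
`x ↦ f(x·γ)` and to `f`, give `|det μ| ∫ f(x·γ) = |det (μγ)| ∫ f`, and `|det μ|` cancels.
-/

section Lattice

open scoped Matrix

variable {ι : Type*}

/-- The coset `a + dN` in `ℚ^ι`, for a subgroup `N` of `ℤ^ι`; taking `N = ⊤` gives the affine
lattices whose characteristic functions `ind` span `Sc`. -/
def latticeCoset (N : Submodule ℤ (ι → ℤ)) (a : ι → ℚ) (d : ℚ) : Set (ι → ℚ) :=
  {x | ∃ l ∈ N, x = a + d • (Int.cast ∘ l)}

theorem ind_eq_indicator {n : ℕ} (a : Fin n → ℚ) (d : ℚ) :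
    ind n a d = (latticeCoset ⊤ a d).indicator 1 := by
  classical
  funext x
  simp [ind, latticeCoset, Set.indicator_apply, funext_iff]

theorem add_mem_latticeCoset_iff {N : Submodule ℤ (ι → ℤ)} {a t x : ι → ℚ} {d : ℚ} :
    x + t ∈ latticeCoset N a d ↔ x ∈ latticeCoset N (a - t) d := by
  simp only [latticeCoset, Set.mem_ofPred_eq, ← eq_sub_iff_add_eq, sub_add_eq_add_sub]

theorem smul_mem_latticeCoset_iff {N : Submodule ℤ (ι → ℤ)} {a x : ι → ℚ} {c d : ℚ}
    (hc : c ≠ 0) : c • x ∈ latticeCoset N a d ↔ x ∈ latticeCoset N (c⁻¹ • a) (c⁻¹ * d) := by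
  simp only [latticeCoset, Set.mem_ofPred_eq, ← eq_inv_smul_iff₀ hc, smul_add, smul_smul]

theorem mem_latticeCoset_add_smul_iff {N : Submodule ℤ (ι → ℤ)} {a x : ι → ℚ} {d : ℚ}
    {k : ι → ℤ} :
    x ∈ latticeCoset N (a + d • (Int.cast ∘ k)) d ↔
      ∃ l, l - k ∈ N ∧ x = a + d • (Int.cast ∘ l) := by
  have hcast (l : ι → ℤ) :
      (Int.cast ∘ k + Int.cast ∘ (l - k) : ι → ℚ) = Int.cast ∘ l := by
    funext i
    simp
  refine (Equiv.subRight k).surjective.exists.trans (exists_congr fun l => ?_)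
  rw [Equiv.subRight_apply, add_assoc, ← smul_add, hcast]

theorem add_smul_intCast_injective (a : ι → ℚ) {d : ℚ} (hd : d ≠ 0) :
    Function.Injective fun k : ι → ℤ => a + d • (Int.cast ∘ k : ι → ℚ) :=
  (add_right_injective a).comp <|
    (smul_right_injective _ hd).comp Int.cast_injective.comp_left

theorem add_smul_mem_latticeCoset_out_iff {N : Submodule ℤ (ι → ℤ)} {a : ι → ℚ} {d : ℚ}
    (hd : d ≠ 0) {k : ι → ℤ} {q : (ι → ℤ) ⧸ N} :
    a + d • (Int.cast ∘ k) ∈ latticeCoset N (a + d • (Int.cast ∘ q.out)) d ↔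
      Submodule.Quotient.mk k = q := by
  conv_rhs => rw [← Submodule.Quotient.mk_out q, Submodule.Quotient.eq]
  simp [mem_latticeCoset_add_smul_iff, -add_right_inj,
    (add_smul_intCast_injective a hd).eq_iff]

theorem indicator_latticeCoset_top_eq_sum (N : Submodule ℤ (ι → ℤ)) [Fintype ((ι → ℤ) ⧸ N)]
    {R : Type*} [AddCommMonoidWithOne R] (a : ι → ℚ) {d : ℚ} (hd : d ≠ 0) (x : ι → ℚ) :
    (latticeCoset ⊤ a d).indicator (1 : (ι → ℚ) → R) x =
      ∑ q : (ι → ℤ) ⧸ N, (latticeCoset N (a + d • (Int.cast ∘ q.out)) d).indicator 1 x := by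
  classical
  by_cases hx : x ∈ latticeCoset ⊤ a d
  · rw [Set.indicator_of_mem hx]
    obtain ⟨k, -, rfl⟩ := hx
    simp only [Set.indicator_apply, add_smul_mem_latticeCoset_out_iff hd, Finset.sum_ite_eq,
      Finset.mem_univ, if_true, Pi.one_apply]
  · rw [Set.indicator_of_notMem hx]
    refine (Finset.sum_eq_zero fun q _ => Set.indicator_of_notMem (fun hq => hx ?_) _).symm
    obtain ⟨l, -, hl⟩ := mem_latticeCoset_add_smul_iff.1 hq
    exact ⟨l, Submodule.mem_top, hl⟩

variable [Fintype ι] [DecidableEq ι]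

theorem vecMul_mem_latticeCoset_range_iff {A : Matrix ι ι ℤ} {γ : GL ι ℚ}
    (hA : (γ : Matrix ι ι ℚ) = A.map (↑)) {a x : ι → ℚ} {d : ℚ} :
    x ᵥ* (γ : Matrix ι ι ℚ) ∈ latticeCoset (LinearMap.range A.vecMulLinear) a d ↔
      x ∈ latticeCoset ⊤ (a ᵥ* (↑γ⁻¹ : Matrix ι ι ℚ)) d := by
  have hcast (k : ι → ℤ) : (Int.cast ∘ (k ᵥ* A) : ι → ℚ) = (Int.cast ∘ k) ᵥ* ↑γ := by
    rw [hA]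
    exact funext (RingHom.map_vecMul (Int.castRingHom ℚ) A k)
  have hγ : (a ᵥ* (↑γ⁻¹ : Matrix ι ι ℚ)) ᵥ* ↑γ = a := by
    simp [Matrix.vecMul_vecMul]
  have hinj := Matrix.vecMul_injective_of_isUnit γ.isUnit
  simp only [latticeCoset, Set.mem_ofPred_eq, LinearMap.mem_range, exists_exists_eq_and,
    Matrix.vecMulLinear_apply, hcast, Submodule.mem_top, true_and]
  refine exists_congr fun k => ?_
  rw [← hinj.eq_iff (a := x), Matrix.add_vecMul, Matrix.smul_vecMul, hγ]

theorem card_quotient_range_of_injective {M : Type*} [AddCommGroup M] [Module.Free ℤ M]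
    [Module.Finite ℤ M] {f : M →ₗ[ℤ] M} (hf : Function.Injective f) :
    Nat.card (M ⧸ LinearMap.range f) = (LinearMap.det f).natAbs :=
  (Submodule.natAbs_det_equiv _ (LinearEquiv.ofInjective f hf)).symm

theorem det_vecMulLinear {R : Type*} [CommRing R] (A : Matrix ι ι R) :
    LinearMap.det A.vecMulLinear = A.det := by
  rw [← Matrix.det_transpose, ← LinearMap.det_toLin', Matrix.toLin'_apply',
    ← Matrix.vecMulLinear_transpose, Matrix.transpose_transpose]

theorem card_quotient_range_vecMulLinear {A : Matrix ι ι ℤ} (hA : A.det ≠ 0) :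
    Nat.card ((ι → ℤ) ⧸ LinearMap.range A.vecMulLinear) = A.det.natAbs := by
  have hinj : Function.Injective A.vecMulLinear :=
    (injective_iff_map_eq_zero _).2 fun _ => Matrix.eq_zero_of_vecMul_eq_zero hA
  rw [card_quotient_range_of_injective hinj, det_vecMulLinear]

theorem card_quotient_range_vecMulLinear_eq_abs_det {A : Matrix ι ι ℤ} {γ : GL ι ℚ}
    (hA : (γ : Matrix ι ι ℚ) = A.map (↑)) :
    (Nat.card ((ι → ℤ) ⧸ LinearMap.range A.vecMulLinear) : ℚ) = |(γ : Matrix ι ι ℚ).det| := by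
  have hdet : (γ : Matrix ι ι ℚ).det = A.det := by
    rw [hA]
    exact (RingHom.map_det (Int.castRingHom ℚ) A).symm
  have hA0 : A.det ≠ 0 := by
    rw [← Int.cast_ne_zero (α := ℚ), ← hdet]
    exact γ.det_ne_zero
  rw [card_quotient_range_vecMulLinear hA0, Nat.cast_natAbs, Int.cast_abs, hdet]

theorem finite_quotient_range_vecMulLinear {A : Matrix ι ι ℤ} {γ : GL ι ℚ}
    (hA : (γ : Matrix ι ι ℚ) = A.map (↑)) :
    Finite ((ι → ℤ) ⧸ LinearMap.range A.vecMulLinear) :=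
  Nat.finite_of_card_ne_zero <| by
    rw [← Nat.cast_ne_zero (R := ℚ), card_quotient_range_vecMulLinear_eq_abs_det hA]
    exact abs_ne_zero.2 γ.det_ne_zero

theorem exists_scalar_mul_eq_map_intCast (γ : GL ι ℚ) :
    ∃ u : ℚˣ, 0 < (u : ℚ) ∧
      (∃ B : Matrix ι ι ℤ, (Matrix.GeneralLinearGroup.scalar ι u : Matrix ι ι ℚ) = B.map (↑)) ∧
      ∃ A : Matrix ι ι ℤ, ↑(Matrix.GeneralLinearGroup.scalar ι u * γ) = A.map ((↑) : ℤ → ℚ) := by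
  have hden : 0 < ((γ : Matrix ι ι ℚ).den : ℚ) :=
    Nat.cast_pos.2 (Nat.pos_of_ne_zero (Matrix.den_ne_zero _))
  refine ⟨Units.mk0 _ hden.ne', hden, ⟨((γ : Matrix ι ι ℚ).den : ℕ), ?_⟩,
    (γ : Matrix ι ι ℚ).num, ?_⟩
  · rw [Matrix.GeneralLinearGroup.coe_scalar, Units.val_mk0, Matrix.scalar_apply,
      Matrix.map_natCast Int.cast_zero]
    simp only [Int.cast_natCast]
  · rw [Units.val_mul, Matrix.GeneralLinearGroup.coe_scalar, Units.val_mk0, Matrix.scalar_apply,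
      ← Matrix.smul_eq_diagonal_mul, ← eq_inv_smul_iff₀ hden.ne']
    exact (Matrix.inv_denom_smul_num _).symm

end Lattice

section Haar

open scoped Matrix

variable {n : ℕ}

theorem ind_mem_Sc (a : Fin n → ℚ) {d : ℚ} (hd : 0 < d) : ind n a d ∈ Sc n :=
  Submodule.subset_span ⟨a, d, hd, rfl⟩

theorem comp_mem_Sc {φ : (Fin n → ℚ) → Fin n → ℚ}
    (hφ : ∀ a d, 0 < d → (fun x => ind n a d (φ x)) ∈ Sc n)
    {f : (Fin n → ℚ) → ℂ} (hf : f ∈ Sc n) : (fun x => f (φ x)) ∈ Sc n := by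
  suffices Sc n ≤ (Sc n).comap (LinearMap.funLeft ℂ ℂ φ) from this hf
  refine Submodule.span_le.2 ?_
  rintro _ ⟨a, d, hd, rfl⟩
  exact hφ a d hd

theorem ind_comp_add_right (a t : Fin n → ℚ) (d : ℚ) :
    (fun x => ind n a d (x + t)) = ind n (a - t) d := by
  classical
  funext x
  simp only [ind_eq_indicator, Set.indicator_apply, add_mem_latticeCoset_iff, Pi.one_apply]

theorem ind_comp_smul (a : Fin n → ℚ) (d : ℚ) {c : ℚ} (hc : c ≠ 0) :
    (fun x => ind n a d (c • x)) = ind n (c⁻¹ • a) (c⁻¹ * d) := by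
  classical
  funext x
  simp only [ind_eq_indicator, Set.indicator_apply, smul_mem_latticeCoset_iff hc, Pi.one_apply]

theorem comp_smul_mem_Sc {c : ℚ} (hc : 0 < c) {f : (Fin n → ℚ) → ℂ} (hf : f ∈ Sc n) :
    (fun x => f (c • x)) ∈ Sc n :=
  comp_mem_Sc (fun a d hd => by
    rw [ind_comp_smul a d hc.ne']
    exact ind_mem_Sc _ (by positivity)) hf

theorem ind_comp_vecMul_eq_sum {A : Matrix (Fin n) (Fin n) ℤ} {γ : GL (Fin n) ℚ}
    (hA : (γ : Matrix (Fin n) (Fin n) ℚ) = A.map (↑))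
    [Fintype ((Fin n → ℤ) ⧸ LinearMap.range A.vecMulLinear)]
    (a : Fin n → ℚ) {d : ℚ} (hd : d ≠ 0) :
    (fun x => ind n a d (x ᵥ* (γ : Matrix (Fin n) (Fin n) ℚ))) =
      ∑ q : (Fin n → ℤ) ⧸ LinearMap.range A.vecMulLinear,
        ind n ((a + d • (Int.cast ∘ q.out)) ᵥ* (↑γ⁻¹ : Matrix (Fin n) (Fin n) ℚ)) d := by
  classical
  funext x
  simp only [ind_eq_indicator, Finset.sum_apply,
    indicator_latticeCoset_top_eq_sum (LinearMap.range A.vecMulLinear) a hd,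
    Set.indicator_apply, vecMul_mem_latticeCoset_range_iff hA, Pi.one_apply]

theorem comp_vecMul_mem_Sc_of_eq_map_intCast {A : Matrix (Fin n) (Fin n) ℤ} {γ : GL (Fin n) ℚ}
    (hA : (γ : Matrix (Fin n) (Fin n) ℚ) = A.map (↑)) {f : (Fin n → ℚ) → ℂ} (hf : f ∈ Sc n) :
    (fun x => f (x ᵥ* (γ : Matrix (Fin n) (Fin n) ℚ))) ∈ Sc n := by
  have := finite_quotient_range_vecMulLinear hA
  have := Fintype.ofFinite ((Fin n → ℤ) ⧸ LinearMap.range A.vecMulLinear)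
  refine comp_mem_Sc (fun a d hd => ?_) hf
  rw [ind_comp_vecMul_eq_sum hA a hd.ne']
  exact Submodule.sum_mem _ fun q _ => ind_mem_Sc _ hd

theorem comp_vecMul_mem_Sc (γ : GL (Fin n) ℚ) {f : (Fin n → ℚ) → ℂ} (hf : f ∈ Sc n) :
    (fun x => f (x ᵥ* (γ : Matrix (Fin n) (Fin n) ℚ))) ∈ Sc n := by
  obtain ⟨u, hu, -, A, hA⟩ := exists_scalar_mul_eq_map_intCast γ
  have hγ (x : Fin n → ℚ) : x ᵥ* (γ : Matrix (Fin n) (Fin n) ℚ) =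
      ((u : ℚ)⁻¹ • x) ᵥ* ↑(Matrix.GeneralLinearGroup.scalar (Fin n) u * γ) := by
    simp [Matrix.GeneralLinearGroup.coe_scalar, ← Matrix.smul_eq_diagonal_mul,
      Matrix.vecMul_smul, Matrix.smul_vecMul]
  simp only [hγ]
  exact comp_smul_mem_Sc (inv_pos.2 hu) (comp_vecMul_mem_Sc_of_eq_map_intCast hA hf)

/-- The action `f ↦ (x ↦ f(x·γ))` of `GLₙ(ℚ)` on `S(ℚⁿ)`. -/
noncomputable def compVecMul (γ : GL (Fin n) ℚ) : Sc n →ₗ[ℂ] Sc n :=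
  (LinearMap.funLeft ℂ ℂ fun x => x ᵥ* (γ : Matrix (Fin n) (Fin n) ℚ)).restrict
    fun _ => comp_vecMul_mem_Sc γ

theorem compVecMul_mul_apply (γ δ : GL (Fin n) ℚ) (f : Sc n) :
    compVecMul (γ * δ) f = compVecMul γ (compVecMul δ f) :=
  Subtype.ext <| funext fun x => congrArg f.1 (Matrix.vecMul_vecMul x _ _).symm

variable {E : Type*} [AddCommMonoid E] [Module ℂ E]

theorem Sc_hom_ext {g h : Sc n →ₗ[ℂ] E}
    (hgh : ∀ a d (hd : 0 < d), g ⟨ind n a d, ind_mem_Sc a hd⟩ = h ⟨ind n a d, ind_mem_Sc a hd⟩) :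
    g = h := by
  refine (Submodule.linearMap_eq_iff_of_eq_span (V := Sc n) g h rfl).2 ?_
  rintro ⟨_, a, d, hd, rfl⟩
  exact hgh a d hd

/-- Translation invariance of a distribution `h` on `S(ℚⁿ)`, valued in an arbitrary complex vector
space. -/
def IsTranslationInvariant (h : Sc n →ₗ[ℂ] E) : Prop :=
  ∀ (t : Fin n → ℚ) (f : (Fin n → ℚ) → ℂ) (hf : f ∈ Sc n) (hf' : (fun x => f (x + t)) ∈ Sc n),
    h ⟨fun x => f (x + t), hf'⟩ = h ⟨f, hf⟩

theorem IsTranslationInvariant.map_ind_eq {h : Sc n →ₗ[ℂ] E} (hinv : IsTranslationInvariant h)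
    (a b : Fin n → ℚ) {d : ℚ} (hd : 0 < d) :
    h ⟨ind n a d, ind_mem_Sc a hd⟩ = h ⟨ind n b d, ind_mem_Sc b hd⟩ := by
  have hab : (fun x => ind n b d (x + (b - a))) = ind n a d := by
    rw [ind_comp_add_right, sub_sub_cancel]
  simpa only [hab] using hinv (b - a) _ (ind_mem_Sc b hd) (hab ▸ ind_mem_Sc a hd)

theorem IsTranslationInvariant.map_compVecMul_ind {h : Sc n →ₗ[ℂ] E}
    (hinv : IsTranslationInvariant h) {A : Matrix (Fin n) (Fin n) ℤ} {γ : GL (Fin n) ℚ}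
    (hA : (γ : Matrix (Fin n) (Fin n) ℚ) = A.map (↑)) (a : Fin n → ℚ) {d : ℚ} (hd : 0 < d) :
    h (compVecMul γ ⟨ind n a d, ind_mem_Sc a hd⟩) =
      Nat.card ((Fin n → ℤ) ⧸ LinearMap.range A.vecMulLinear) •
        h ⟨ind n a d, ind_mem_Sc a hd⟩ := by
  have := finite_quotient_range_vecMulLinear hA
  have := Fintype.ofFinite ((Fin n → ℤ) ⧸ LinearMap.range A.vecMulLinear)
  have hsum : compVecMul γ ⟨ind n a d, ind_mem_Sc a hd⟩ =
      ∑ q : (Fin n → ℤ) ⧸ LinearMap.range A.vecMulLinear,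
        ⟨ind n ((a + d • (Int.cast ∘ q.out)) ᵥ* (↑γ⁻¹ : Matrix (Fin n) (Fin n) ℚ)) d,
          ind_mem_Sc _ hd⟩ :=
    Subtype.ext <| (ind_comp_vecMul_eq_sum hA a hd.ne').trans <| by
      rw [AddSubmonoidClass.coe_finsetSum]
  rw [hsum, map_sum, Finset.sum_congr rfl fun q _ => hinv.map_ind_eq _ a hd, Finset.sum_const,
    Finset.card_univ, Nat.card_eq_fintype_card]

theorem IsTranslationInvariant.map_compVecMul_of_eq_map_intCast {h : Sc n →ₗ[ℂ] E}
    (hinv : IsTranslationInvariant h) {A : Matrix (Fin n) (Fin n) ℤ} {γ : GL (Fin n) ℚ}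
    (hA : (γ : Matrix (Fin n) (Fin n) ℚ) = A.map (↑)) (f : Sc n) :
    h (compVecMul γ f) = ((|(γ : Matrix (Fin n) (Fin n) ℚ).det| : ℚ) : ℂ) • h f := by
  suffices h ∘ₗ compVecMul γ = ((|(γ : Matrix (Fin n) (Fin n) ℚ).det| : ℚ) : ℂ) • h from
    DFunLike.congr_fun this f
  refine Sc_hom_ext fun a d hd => ?_
  rw [← card_quotient_range_vecMulLinear_eq_abs_det hA, Rat.cast_natCast, LinearMap.smul_apply,
    Nat.cast_smul_eq_nsmul]
  exact hinv.map_compVecMul_ind hA a hd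

end Haar

theorem haar_change_of_variables_general {n : ℕ} {E : Type*} [AddCommMonoid E] [Module ℂ E]
    (h : Sc n →ₗ[ℂ] E) (hinv : IsTranslationInvariant h) (γ : GL (Fin n) ℚ) (f : Sc n) :
    h (compVecMul γ f) = ((|(γ : Matrix (Fin n) (Fin n) ℚ).det| : ℚ) : ℂ) • h f := by
  obtain ⟨u, -, ⟨B, hB⟩, A, hA⟩ := exists_scalar_mul_eq_map_intCast γ
  set μ := Matrix.GeneralLinearGroup.scalar (Fin n) u
  have hμ : IsUnit ((|(μ : Matrix (Fin n) (Fin n) ℚ).det| : ℚ) : ℂ) :=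
    (Rat.cast_ne_zero.2 (abs_ne_zero.2 μ.det_ne_zero)).isUnit
  refine hμ.smul_left_cancel.1 ?_
  calc _ = h (compVecMul μ (compVecMul γ f)) :=
        (hinv.map_compVecMul_of_eq_map_intCast hB _).symm
    _ = h (compVecMul (μ * γ) f) := by rw [compVecMul_mul_apply]
    _ = ((|(↑(μ * γ) : Matrix (Fin n) (Fin n) ℚ).det| : ℚ) : ℂ) • h f :=
        hinv.map_compVecMul_of_eq_map_intCast hA f
    _ = _ := by rw [Units.val_mul, Matrix.det_mul, abs_mul, Rat.cast_mul, mul_smul]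

open Matrix in
/-- Change of variables for the Haar distribution `h_{ℤⁿ}` on `S(ℚⁿ)` (the
translation-invariant distribution normalized by `h(χ_{ℤⁿ}) = 1`): for `f ∈ S(ℚⁿ)` and
`γ ∈ GLₙ(ℚ)`, `∫ f(x·γ) dh(x) = |det γ| · ∫ f(x) dh(x)`. -/
theorem haar_change_of_variables
    (n : ℕ) (h : Sc n →ₗ[ℂ] ℂ)
    (hnorm : ∀ hm : ind n 0 1 ∈ Sc n, h ⟨ind n 0 1, hm⟩ = 1)
    (hinv : ∀ (t : Fin n → ℚ) (f : (Fin n → ℚ) → ℂ) (hf : f ∈ Sc n)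
      (hf' : (fun x => f (x + t)) ∈ Sc n),
      h ⟨fun x => f (x + t), hf'⟩ = h ⟨f, hf⟩)
    (γ : GL (Fin n) ℚ) (f : (Fin n → ℚ) → ℂ) (hf : f ∈ Sc n)
    (hf2 : (fun x => f (Matrix.vecMul x (γ : Matrix (Fin n) (Fin n) ℚ))) ∈ Sc n) :
    h ⟨fun x => f (Matrix.vecMul x (γ : Matrix (Fin n) (Fin n) ℚ)), hf2⟩
      = ((|(γ : Matrix (Fin n) (Fin n) ℚ).det| : ℚ) : ℂ) * h ⟨f, hf⟩ :=
  haar_change_of_variables_general h hinv γ ⟨f, hf⟩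
end
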